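/- arXiv:2403.07264 — 3 statements merged into one kernel-verified Lean document; each statement's English description precedes it below -/
import Mathlib

section
/- Let p ≥ n be positive integers, X a real p×n matrix, α > 0, and r > 0. Set Σ̂ := (1/n)·X·Xᵀ, Ǧ := (1/n)·Xᵀ·X, and ρ := r·n^{−α}. Then trace((Σ̂ + ρ·I_p)⁻²·Σ̂) = n^{α+1} · (d/dr)[ r · S_{esd(n^α·Ǧ)}(−r) ], i.e., the map r ↦ r·S_{esd(n^α·Ǧ)}(−r) is differentiable at r and n^{α+1} times its derivative equals the trace on the left-hand side. -/
open Matrix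

/-- The Stieltjes transform of the empirical spectral measure of a symmetric `m×m` real
matrix `M` at `z`: `S_{esd(M)}(z) = (1/m)·Σᵢ 1/(λᵢ − z)`. -/
noncomputable def stieltjesESD {m : ℕ} {M : Matrix (Fin m) (Fin m) ℝ}
    (hM : M.IsHermitian) (z : ℝ) : ℝ :=
  (1 / (m : ℝ)) * ∑ i, 1 / (hM.eigenvalues i - z)

/-!
Write `T(M, t) = trace ((M + t)⁻² M)`. As `(A B + t) A = A (B A + t)`, one has
`T(A B, t) = T(B A, t)`, so the sample covariance matrix may be replaced by the Gram matrix; scaling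
gives `T(c M, c t) = c⁻¹ T(M, t)`. On the spectrum of a Hermitian matrix, `T` is
`∑ᵢ λᵢ / (λᵢ + t)²`, whose summands are the derivatives in `t` of `t / (λᵢ + t)`, the summands of
`m t S(-t)`.
-/

/-- The trace of `(M + t • 1)⁻² * M`, which for a sample covariance matrix `M` is the quantity to be
computed. It is `0` when `M + t • 1` is not invertible, since the matrix inverse then is. -/
noncomputable def resolventSqTrace {ι R : Type*} [Fintype ι] [DecidableEq ι] [CommRing R]
    (M : Matrix ι ι R) (t : R) : R :=
  trace ((M + t • (1 : Matrix ι ι R))⁻¹ * (M + t • (1 : Matrix ι ι R))⁻¹ * M)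

section CommRing

variable {ι κ R : Type*} [Fintype ι] [DecidableEq ι] [Fintype κ] [DecidableEq κ] [CommRing R]

theorem inv_mul_eq_mul_inv_of_mul_eq_mul {P : Matrix ι ι R} {Q : Matrix κ κ R} {A : Matrix ι κ R}
    (hP : IsUnit P) (hQ : IsUnit Q) (h : P * A = A * Q) : P⁻¹ * A = A * Q⁻¹ := by
  rw [isUnit_iff_isUnit_det] at hP hQ
  calc P⁻¹ * A = P⁻¹ * (A * Q * Q⁻¹) := by rw [mul_nonsing_inv_cancel_right _ A hQ]
    _ = A * Q⁻¹ := by rw [← h, Matrix.mul_assoc, nonsing_inv_mul_cancel_left _ _ hP]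

theorem isUnit_mul_add_smul_one_comm (A : Matrix ι κ R) (B : Matrix κ ι R) {t : R}
    (ht : IsUnit t) :
    IsUnit (A * B + t • (1 : Matrix ι ι R)) ↔ IsUnit (B * A + t • (1 : Matrix κ κ R)) := by
  obtain ⟨u, rfl⟩ := ht
  have factor_left : A * B + (u : R) • (1 : Matrix ι ι R) = u • ((u⁻¹ • A) * B + 1) := by
    rw [smul_add, Matrix.smul_mul, smul_inv_smul, Units.smul_def]
  have factor_right : B * A + (u : R) • (1 : Matrix κ κ R) = u • (B * (u⁻¹ • A) + 1) := by
    rw [smul_add, Matrix.mul_smul, smul_inv_smul, Units.smul_def]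
  rw [factor_left, factor_right, isUnit_smul_iff, isUnit_smul_iff, isUnit_iff_isUnit_det,
    isUnit_iff_isUnit_det, det_mul_add_one_comm]

theorem resolventSqTrace_mul_comm (A : Matrix ι κ R) (B : Matrix κ ι R) {t : R}
    (ht : IsUnit t) : resolventSqTrace (A * B) t = resolventSqTrace (B * A) t := by
  set P := A * B + t • (1 : Matrix ι ι R) with P_def
  set Q := B * A + t • (1 : Matrix κ κ R) with Q_def
  change trace (P⁻¹ * P⁻¹ * (A * B)) = trace (Q⁻¹ * Q⁻¹ * (B * A))
  have isUnit_iff : IsUnit P ↔ IsUnit Q := isUnit_mul_add_smul_one_comm A B ht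
  by_cases hP : IsUnit P
  · have intertwine : P * A = A * Q := by
      simp only [P_def, Q_def, Matrix.add_mul, Matrix.mul_add, Matrix.mul_assoc, Matrix.smul_mul,
        Matrix.mul_smul, Matrix.one_mul, Matrix.mul_one]
    have push_through : P⁻¹ * A = A * Q⁻¹ :=
      inv_mul_eq_mul_inv_of_mul_eq_mul hP (isUnit_iff.1 hP) intertwine
    calc trace (P⁻¹ * P⁻¹ * (A * B))
        = trace (P⁻¹ * (P⁻¹ * A) * B) := by simp only [Matrix.mul_assoc]
      _ = trace (A * (Q⁻¹ * Q⁻¹ * B)) := by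
        rw [push_through, ← Matrix.mul_assoc, push_through]
        simp only [Matrix.mul_assoc]
      _ = trace (Q⁻¹ * Q⁻¹ * (B * A)) := by rw [Matrix.trace_mul_comm, Matrix.mul_assoc]
  · have hQ : ¬IsUnit Q := mt isUnit_iff.2 hP
    rw [isUnit_iff_isUnit_det] at hP hQ
    simp only [nonsing_inv_apply_not_isUnit _ hP, nonsing_inv_apply_not_isUnit _ hQ,
      Matrix.zero_mul, trace_zero]

theorem resolventSqTrace_units_smul (u : Rˣ) {M : Matrix ι ι R} {t : R}
    (h : IsUnit (M + t • (1 : Matrix ι ι R))) :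
    resolventSqTrace (u • M) (u * t) = u⁻¹ • resolventSqTrace M t := by
  have factor : u • M + (u * t : R) • (1 : Matrix ι ι R) = u • (M + t • 1) := by
    rw [smul_add, mul_smul, Units.smul_def u (t • _)]
  rw [resolventSqTrace, factor, Matrix.inv_smul' _ u ((isUnit_iff_isUnit_det _).1 h)]
  simp only [resolventSqTrace, Matrix.smul_mul, Matrix.mul_smul, trace_smul, smul_inv_smul]

theorem isUnit_add_smul_one_iff_neg_notMem_spectrum {M : Matrix ι ι R} {t : R} :
    IsUnit (M + t • (1 : Matrix ι ι R)) ↔ -t ∉ spectrum R M := by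
  rw [spectrum.notMem_iff, Algebra.algebraMap_eq_smul_one, neg_smul, ← neg_add', IsUnit.neg_iff,
    add_comm]

end CommRing

section RCLike

variable {ι 𝕜 : Type*} [Fintype ι] [DecidableEq ι] [RCLike 𝕜] {M : Matrix ι ι 𝕜}

theorem trace_cfc_eq_sum_eigenvalues (hM : M.IsHermitian) (f : ℝ → ℝ) :
    trace (cfc f M) = ∑ i, (f (hM.eigenvalues i) : 𝕜) := by
  rw [hM.cfc_eq, IsHermitian.cfc, Unitary.conjStarAlgAut_apply, trace_mul_cycle,
    Unitary.coe_star_mul_self, Matrix.one_mul, trace_diagonal]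
  rfl

theorem inv_add_smul_one_eq_cfc (hM : M.IsHermitian) {t : ℝ} (ht : -t ∉ spectrum ℝ M) :
    (M + (t : 𝕜) • (1 : Matrix ι ι 𝕜))⁻¹ = cfc (fun x : ℝ => (x + t)⁻¹) M := by
  have hM' : IsSelfAdjoint M := hM
  have ne_zero : ∀ x ∈ spectrum ℝ M, x + t ≠ 0 := fun x hx h =>
    ht (eq_neg_of_add_eq_zero_left h ▸ hx)
  have add_eq : cfc (fun x : ℝ => x + t) M = M + (t : 𝕜) • (1 : Matrix ι ι 𝕜) := by
    rw [cfc_add_const t (fun x => x) M, cfc_id' ℝ M, Algebra.algebraMap_eq_smul_one]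
    simp
  rw [cfc_inv (fun x : ℝ => x + t) M ne_zero, add_eq, nonsing_inv_eq_ringInverse]

theorem resolventSqTrace_eq_sum_eigenvalues (hM : M.IsHermitian) {t : ℝ}
    (ht : -t ∉ spectrum ℝ M) :
    resolventSqTrace M (t : 𝕜) =
      ∑ i, ((hM.eigenvalues i / (hM.eigenvalues i + t) ^ 2 : ℝ) : 𝕜) := by
  have hM' : IsSelfAdjoint M := hM
  have cont (f : ℝ → ℝ) : ContinuousOn f (spectrum ℝ M) := M.finite_real_spectrum.continuousOn f
  have cfc_eq : cfc (fun x : ℝ => (x + t)⁻¹ * (x + t)⁻¹ * x) M =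
      cfc (fun x : ℝ => (x + t)⁻¹) M * cfc (fun x : ℝ => (x + t)⁻¹) M * M := by
    rw [cfc_mul _ _ M (cont _) (cont _), cfc_mul _ _ M (cont _) (cont _), cfc_id' ℝ M]
  rw [resolventSqTrace, inv_add_smul_one_eq_cfc hM ht, ← cfc_eq, trace_cfc_eq_sum_eigenvalues hM]
  refine Finset.sum_congr rfl fun i _ => congrArg _ ?_
  rw [div_eq_mul_inv, sq, mul_inv, mul_comm]

open scoped ComplexOrder in
theorem neg_notMem_spectrum_of_posSemidef (hM : M.PosSemidef) {r : ℝ} (hr : 0 < r) :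
    -r ∉ spectrum ℝ M := by
  rw [hM.isHermitian.spectrum_real_eq_range_eigenvalues]
  rintro ⟨i, hi⟩
  linarith [hM.eigenvalues_nonneg i]

end RCLike

theorem hasDerivAt_div_const_add {𝕜 : Type*} [NontriviallyNormedField 𝕜] {a r : 𝕜}
    (h : a + r ≠ 0) : HasDerivAt (fun s => s / (a + s)) (a / (a + r) ^ 2) r :=
  ((hasDerivAt_id r).fun_div ((hasDerivAt_id r).const_add a) h).congr_deriv <| by
    simp only [id]
    ring

section StieltjesTransform

variable {m : ℕ} {M : Matrix (Fin m) (Fin m) ℝ}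

theorem mul_stieltjesESD_neg (hM : M.IsHermitian) (s : ℝ) :
    s * stieltjesESD hM (-s) =
      (1 / (m : ℝ)) * ∑ i, s / (hM.eigenvalues i + s) := by
  rw [stieltjesESD, mul_left_comm, Finset.mul_sum]
  simp only [sub_neg_eq_add, mul_one_div]

theorem hasDerivAt_mul_stieltjesESD_neg (hM : M.IsHermitian) {r : ℝ} (hr : -r ∉ spectrum ℝ M) :
    HasDerivAt (fun s : ℝ => s * stieltjesESD hM (-s))
      ((1 / (m : ℝ)) * resolventSqTrace M r) r := by
  have ne_zero (i : Fin m) : hM.eigenvalues i + r ≠ 0 := fun h =>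
    hr (eq_neg_of_add_eq_zero_left h ▸ hM.eigenvalues_mem_spectrum_real i)
  have trace_eq := resolventSqTrace_eq_sum_eigenvalues hM hr
  simp only [RCLike.ofReal_real_eq_id, id] at trace_eq
  simp only [mul_stieltjesESD_neg, trace_eq]
  exact (HasDerivAt.fun_sum fun i _ => hasDerivAt_div_const_add (ne_zero i)).const_mul _

end StieltjesTransform

theorem trace_eq_deriv_stieltjes_general {ι : Type*} [Fintype ι] [DecidableEq ι] {n : ℕ}
    (hn : 0 < n) (X : Matrix ι (Fin n) ℝ) (α : ℝ) {r : ℝ} (hr : r ≠ 0)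
    (hG : (((n : ℝ) ^ α) • ((1 / (n : ℝ)) • (Xᵀ * X))).IsHermitian)
    (hspec : -r ∉ spectrum ℝ (((n : ℝ) ^ α) • ((1 / (n : ℝ)) • (Xᵀ * X)))) :
    ∃ d : ℝ,
      HasDerivAt (fun s : ℝ => s * stieltjesESD hG (-s)) d r ∧
      resolventSqTrace ((1 / (n : ℝ)) • (X * Xᵀ)) (r * (n : ℝ) ^ (-α)) =
        (n : ℝ) ^ (α + 1) * d := by
  refine ⟨_, hasDerivAt_mul_stieltjesESD_neg hG hspec, ?_⟩
  have n_pos : (0 : ℝ) < n := Nat.cast_pos.2 hn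
  set G := (n : ℝ) ^ α • ((1 / (n : ℝ)) • (Xᵀ * X))
  let u : ℝˣ := Units.mk0 ((n : ℝ) ^ α) (Real.rpow_pos_of_pos n_pos α).ne'
  have isUnit_resolvent : IsUnit (G + r • (1 : Matrix (Fin n) (Fin n) ℝ)) :=
    isUnit_add_smul_one_iff_neg_notMem_spectrum.2 hspec
  have rho_eq : r * (n : ℝ) ^ (-α) = ↑u⁻¹ * r := by
    rw [Real.rpow_neg n_pos.le, mul_comm, Units.val_inv_eq_inv_val, Units.val_mk0]
  have gram_eq : (1 / (n : ℝ)) • (Xᵀ * X) = u⁻¹ • G := (inv_smul_smul u _).symm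
  calc resolventSqTrace ((1 / (n : ℝ)) • (X * Xᵀ)) (r * (n : ℝ) ^ (-α))
      = resolventSqTrace ((1 / (n : ℝ)) • (Xᵀ * X)) (r * (n : ℝ) ^ (-α)) := by
        rw [← Matrix.mul_smul, ← Matrix.smul_mul]
        exact resolventSqTrace_mul_comm _ _
          (mul_ne_zero hr (Real.rpow_pos_of_pos n_pos _).ne').isUnit
    _ = (n : ℝ) ^ α * resolventSqTrace G r := by
        rw [rho_eq, gram_eq, resolventSqTrace_units_smul _ isUnit_resolvent, inv_inv,
          Units.smul_def, smul_eq_mul, Units.val_mk0]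
    _ = (n : ℝ) ^ (α + 1) * ((1 / (n : ℝ)) * resolventSqTrace G r) := by
        rw [Real.rpow_add_one n_pos.ne']
        field_simp

/-- With `Σ̂ := (1/n)·X·Xᵀ`, `Ǧ := (1/n)·Xᵀ·X`, `ρ := r·n^{−α}`, `p ≥ n`,
`α > 0`, `r > 0`: the map `r ↦ r·S_{esd(n^α·Ǧ)}(−r)` is differentiable at `r` and
`n^{α+1}` times its derivative equals `trace((Σ̂ + ρ·I_p)⁻²·Σ̂)`. -/
theorem trace_eq_deriv_stieltjes (p n : ℕ) (hn : 0 < n) (hpn : n ≤ p)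
    (X : Matrix (Fin p) (Fin n) ℝ) (α r : ℝ) (hα : 0 < α) (hr : 0 < r)
    (hG : (((n : ℝ) ^ α) • ((1 / (n : ℝ)) • (Xᵀ * X))).IsHermitian) :
    ∃ d : ℝ,
      HasDerivAt (fun s : ℝ => s * stieltjesESD hG (-s)) d r ∧
      Matrix.trace
          ((((1 / (n : ℝ)) • (X * Xᵀ)
                + (r * (n : ℝ) ^ (-α)) • (1 : Matrix (Fin p) (Fin p) ℝ))⁻¹
              * (((1 / (n : ℝ)) • (X * Xᵀ)
                + (r * (n : ℝ) ^ (-α)) • (1 : Matrix (Fin p) (Fin p) ℝ))⁻¹))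
            * ((1 / (n : ℝ)) • (X * Xᵀ)))
        = (n : ℝ) ^ (α + 1) * d := by
  have hPSD : ((n : ℝ) ^ α • ((1 / (n : ℝ)) • (Xᵀ * X))).PosSemidef :=
    ((posSemidef_conjTranspose_mul_self X).smul (by positivity)).smul (by positivity)
  exact trace_eq_deriv_stieltjes_general hn X α hr.ne' hG
    (neg_notMem_spectrum_of_posSemidef hPSD hr)
end

section
/- Let α > 1 and γ > 0, and define I(k) := ∫₀^{1/γ} dx/(1 + k·x^α) and R(k) := k·(1 − I(k)) for k ≥ 0. Then there exists k_crit ≥ 0 with R(k_crit) = 0 such that R is strictly increasing and strictly positive on (k_crit, +∞), R(k) → +∞ as k → +∞, and consequently for every r > 0 there exists a unique k ∈ (k_crit, +∞) with R(k) = r. Here k_crit can be taken to be the largest real number k ≥ 0 with R(k) = 0. -/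
open Filter

/-!
For a finite measure `μ` and an almost everywhere positive `g`, the integral
`I k = ∫ 1 / (1 + k * g)` is antitone and continuous on `[0, ∞)` and, by dominated convergence,
tends to `0`, so `R k = k * (1 - I k)` is continuous and tends to `∞`. Hence the zeros of `R` in
`[0, ∞)` form a nonempty compact set; take `kcrit` to be its greatest element. Beyond it `R` has
no sign change, so it is positive and there `1 - I` is a positive monotone factor, which makes `R`
strictly increasing without any differentiation.
-/

open MeasureTheory Set Topology

section LastLevelPoint

variable {X Y : Type*} [ConditionallyCompleteLinearOrder X] [TopologicalSpace X] [OrderTopology X]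
  [DenselyOrdered X] [LinearOrder Y] [TopologicalSpace Y] [OrderClosedTopology Y]
  {f : X → Y} {a c : X} {y : Y}

lemma exists_ge_eq_of_tendsto_atTop (hf : ContinuousOn f (Ici a)) (hlim : Tendsto f atTop atTop)
    (hy : f a ≤ y) : ∃ x, a ≤ x ∧ f x = y :=
  have : Nonempty X := ⟨a⟩
  isPreconnected_Ici.intermediate_value_Ici self_mem_Ici
    (le_principal_iff.mpr (Ici_mem_atTop a)) hf hlim hy

lemma exists_isGreatest_eq_of_tendsto_atTop [NoMaxOrder Y] (hf : ContinuousOn f (Ici a))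
    (hlim : Tendsto f atTop atTop) (hy : f a ≤ y) :
    ∃ c, IsGreatest {x | a ≤ x ∧ f x = y} c := by
  have : Nonempty X := ⟨a⟩
  have hclosed : IsClosed {x | a ≤ x ∧ f x = y} :=
    hf.preimage_isClosed_of_isClosed isClosed_Ici isClosed_singleton
  obtain ⟨b, hb⟩ := eventually_atTop.mp (hlim.eventually_gt_atTop y)
  have hbdd : BddAbove {x | a ≤ x ∧ f x = y} :=
    ⟨b, fun x hx ↦ le_of_not_ge fun hbx ↦ (hb x hbx).ne' hx.2⟩
  exact ⟨_, hclosed.isGreatest_csSup (exists_ge_eq_of_tendsto_atTop hf hlim hy) hbdd⟩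

lemma lt_apply_of_isGreatest_of_tendsto_atTop (hc : IsGreatest {x | a ≤ x ∧ f x = y} c)
    (hf : ContinuousOn f (Ici a)) (hlim : Tendsto f atTop atTop) {x : X} (hx : c < x) :
    y < f x := by
  by_contra! hle
  have hax : a ≤ x := hc.1.1.trans hx.le
  obtain ⟨z, hxz, hz⟩ :=
    exists_ge_eq_of_tendsto_atTop (hf.mono (Ici_subset_Ici.mpr hax)) hlim hle
  exact (hx.trans_le hxz).not_ge (hc.2 ⟨hax.trans hxz, hz⟩)

lemma existsUnique_mem_Ioi_eq_of_tendsto_atTop (hf : ContinuousOn f (Ici a))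
    (hlim : Tendsto f atTop atTop) (hinj : InjOn f (Ioi a)) (hy : f a < y) :
    ∃! x, x ∈ Ioi a ∧ f x = y := by
  obtain ⟨x, hax, hx⟩ := exists_ge_eq_of_tendsto_atTop hf hlim hy.le
  have hax' : a < x := hax.lt_of_ne (by rintro rfl; exact hy.ne hx)
  exact ⟨x, ⟨hax', hx⟩, fun z hz ↦ hinj hz.1 hax' (hz.2.trans hx.symm)⟩

end LastLevelPoint

/-- The regularizer factor `R k = k * (1 - I k)` attached to a trade-off function `I`. -/
def regularizerFactor (I : ℝ → ℝ) (k : ℝ) : ℝ := k * (1 - I k)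

section RegularizerFactor

variable {I : ℝ → ℝ} {s : Set ℝ}

lemma continuousOn_regularizerFactor (hI : ContinuousOn I s) :
    ContinuousOn (regularizerFactor I) s :=
  continuousOn_id.mul (continuousOn_const.sub hI)

lemma tendsto_regularizerFactor_atTop {l : ℝ} (hI : Tendsto I atTop (𝓝 l)) (hl : l < 1) :
    Tendsto (regularizerFactor I) atTop atTop :=
  tendsto_id.atTop_mul_pos (sub_pos.mpr hl) (hI.const_sub 1)

lemma strictMonoOn_regularizerFactor (hI : AntitoneOn I s) (hs : s ⊆ Ici 0)
    (hpos : ∀ k ∈ s, 0 < regularizerFactor I k) : StrictMonoOn (regularizerFactor I) s := by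
  intro k hk l hl hkl
  have hIk : 0 < 1 - I k := pos_of_mul_pos_right (hpos k hk) (hs hk)
  calc k * (1 - I k) < l * (1 - I k) := by gcongr
    _ ≤ l * (1 - I l) := by
      gcongr
      · exact hs hl
      · exact hI hk hl hkl.le

end RegularizerFactor

/-- The trade-off integral `I k = ∫ 1 / (1 + k * g) ∂μ` of a weight `g`. The first trade-off
integral is the case of `g x = x ^ α` and Lebesgue measure on `(0, 1 / γ]`. -/
noncomputable def tradeoffIntegral {X : Type*} [MeasurableSpace X] (μ : Measure X) (g : X → ℝ)
    (k : ℝ) : ℝ :=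
  ∫ x, 1 / (1 + k * g x) ∂μ

lemma norm_one_div_one_add_mul_le_one {k t : ℝ} (hk : 0 ≤ k) (ht : 0 ≤ t) :
    ‖1 / (1 + k * t)‖ ≤ 1 := by
  have hkt : 0 ≤ k * t := mul_nonneg hk ht
  rw [Real.norm_of_nonneg (by positivity)]
  exact div_le_one_of_le₀ (by linarith) (by positivity)

section TradeoffIntegral

variable {X : Type*} [MeasurableSpace X] {μ : Measure X} {g : X → ℝ}

lemma aestronglyMeasurable_one_div_one_add_mul (hg : AEMeasurable g μ) (k : ℝ) :
    AEStronglyMeasurable (fun x ↦ 1 / (1 + k * g x)) μ :=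
  (((hg.const_mul k).const_add 1).const_div 1).aestronglyMeasurable

variable [IsFiniteMeasure μ]

lemma integrable_one_div_one_add_mul (hg : AEMeasurable g μ) (hg₀ : ∀ᵐ x ∂μ, 0 ≤ g x) {k : ℝ}
    (hk : 0 ≤ k) : Integrable (fun x ↦ 1 / (1 + k * g x)) μ :=
  .of_bound (aestronglyMeasurable_one_div_one_add_mul hg k) 1 <|
    hg₀.mono fun _ hx ↦ norm_one_div_one_add_mul_le_one hk hx

lemma antitoneOn_tradeoffIntegral (hg : AEMeasurable g μ) (hg₀ : ∀ᵐ x ∂μ, 0 ≤ g x) :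
    AntitoneOn (tradeoffIntegral μ g) (Ici 0) := by
  intro k (hk : 0 ≤ k) l (hl : 0 ≤ l) hkl
  refine integral_mono_ae (integrable_one_div_one_add_mul hg hg₀ hl)
    (integrable_one_div_one_add_mul hg hg₀ hk) ?_
  filter_upwards [hg₀] with x hx
  gcongr

lemma continuousOn_tradeoffIntegral (hg : AEMeasurable g μ) (hg₀ : ∀ᵐ x ∂μ, 0 ≤ g x) :
    ContinuousOn (tradeoffIntegral μ g) (Ici 0) := by
  refine continuousOn_of_dominated (bound := fun _ ↦ 1)
    (fun k _ ↦ aestronglyMeasurable_one_div_one_add_mul hg k)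
    (fun k hk ↦ hg₀.mono fun _ hx ↦ norm_one_div_one_add_mul_le_one hk hx)
    (integrable_const 1) ?_
  filter_upwards [hg₀] with x hx
  refine continuousOn_const.div (by fun_prop) fun k (hk : 0 ≤ k) ↦ ?_
  positivity

lemma tendsto_tradeoffIntegral_atTop (hg : AEMeasurable g μ) (hg_pos : ∀ᵐ x ∂μ, 0 < g x) :
    Tendsto (tradeoffIntegral μ g) atTop (𝓝 0) := by
  rw [← integral_zero X ℝ (μ := μ)]
  refine tendsto_integral_filter_of_dominated_convergence (fun _ ↦ 1)
    (.of_forall fun k ↦ aestronglyMeasurable_one_div_one_add_mul hg k) ?_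
    (integrable_const 1) ?_
  · filter_upwards [eventually_ge_atTop 0] with k hk
    exact hg_pos.mono fun _ hx ↦ norm_one_div_one_add_mul_le_one hk hx.le
  · filter_upwards [hg_pos] with x hx
    exact tendsto_const_nhds.div_atTop
      (tendsto_atTop_add_const_left _ 1 (tendsto_id.atTop_mul_const hx))

theorem exists_kcrit_general (hg : AEMeasurable g μ) (hg_pos : ∀ᵐ x ∂μ, 0 < g x) :
    ∃ kcrit : ℝ, 0 ≤ kcrit ∧
      regularizerFactor (tradeoffIntegral μ g) kcrit = 0 ∧
      IsGreatest {k : ℝ | 0 ≤ k ∧ regularizerFactor (tradeoffIntegral μ g) k = 0} kcrit ∧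
      StrictMonoOn (regularizerFactor (tradeoffIntegral μ g)) (Ioi kcrit) ∧
      (∀ k : ℝ, kcrit < k → 0 < regularizerFactor (tradeoffIntegral μ g) k) ∧
      Tendsto (regularizerFactor (tradeoffIntegral μ g)) atTop atTop ∧
      (∀ r : ℝ, 0 < r →
        ∃! k : ℝ, k ∈ Ioi kcrit ∧ regularizerFactor (tradeoffIntegral μ g) k = r) := by
  have hg₀ : ∀ᵐ x ∂μ, 0 ≤ g x := hg_pos.mono fun _ ↦ le_of_lt
  have hcont := continuousOn_regularizerFactor (continuousOn_tradeoffIntegral hg hg₀)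
  have htop := tendsto_regularizerFactor_atTop (tendsto_tradeoffIntegral_atTop hg hg_pos) one_pos
  obtain ⟨c, hc⟩ := exists_isGreatest_eq_of_tendsto_atTop hcont htop (zero_mul _).le
  obtain ⟨hc₀, hRc⟩ := hc.1
  have hpos : ∀ k, c < k → 0 < regularizerFactor (tradeoffIntegral μ g) k :=
    fun _ ↦ lt_apply_of_isGreatest_of_tendsto_atTop hc hcont htop
  have hsub : Ioi c ⊆ Ici 0 := Ioi_subset_Ici hc₀
  have hmono := strictMonoOn_regularizerFactor ((antitoneOn_tradeoffIntegral hg hg₀).mono hsub)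
    hsub hpos
  exact ⟨c, hc₀, hRc, hc, hmono, hpos, htop, fun r hr ↦
    existsUnique_mem_Ioi_eq_of_tendsto_atTop (hcont.mono (Ici_subset_Ici.mpr hc₀)) htop
      hmono.injOn (hRc.trans_lt hr)⟩

end TradeoffIntegral

/-- For `α > 1`, `γ > 0`, with `I(k) := ∫₀^{1/γ} dx/(1 + k·x^α)` and
`R(k) := k·(1 − I(k))` for `k ≥ 0`: there exists `k_crit ≥ 0` with `R(k_crit) = 0`
(which can be taken to be the largest `k ≥ 0` with `R(k) = 0`) such that `R` is strictly
increasing and strictly positive on `(k_crit, +∞)`, `R(k) → +∞` as `k → +∞`, and for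
every `r > 0` there is a unique `k ∈ (k_crit, +∞)` with `R(k) = r`. -/
theorem exists_kcrit (α γ : ℝ) (hα : 1 < α) (hγ : 0 < γ) :
    ∃ kcrit : ℝ, 0 ≤ kcrit ∧
      kcrit * (1 - ∫ x in (0 : ℝ)..(1 / γ), 1 / (1 + kcrit * x ^ α)) = 0 ∧
      IsGreatest
        {k : ℝ | 0 ≤ k ∧ k * (1 - ∫ x in (0 : ℝ)..(1 / γ), 1 / (1 + k * x ^ α)) = 0}
        kcrit ∧
      StrictMonoOn
        (fun k : ℝ => k * (1 - ∫ x in (0 : ℝ)..(1 / γ), 1 / (1 + k * x ^ α)))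
        (Set.Ioi kcrit) ∧
      (∀ k : ℝ, kcrit < k →
        0 < k * (1 - ∫ x in (0 : ℝ)..(1 / γ), 1 / (1 + k * x ^ α))) ∧
      Tendsto (fun k : ℝ => k * (1 - ∫ x in (0 : ℝ)..(1 / γ), 1 / (1 + k * x ^ α)))
        atTop atTop ∧
      (∀ r : ℝ, 0 < r →
        ∃! k : ℝ, k ∈ Set.Ioi kcrit ∧
          k * (1 - ∫ x in (0 : ℝ)..(1 / γ), 1 / (1 + k * x ^ α)) = r) := by
  simp only [intervalIntegral.integral_of_le (one_div_pos.mpr hγ).le]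
  exact exists_kcrit_general (by fun_prop)
    (ae_restrict_of_forall_mem measurableSet_Ioc fun x hx ↦ Real.rpow_pos_of_pos hx.1 α)
end

section
/- Let p, n be positive integers, X a real p×n matrix, y ∈ ℝ^n, and ρ > 0. Let β̂_ρ := ((1/n)·X·Xᵀ + ρ·I_p)⁻¹·(1/n)·X·y be the ridge regressor, and let τ̂ := (1/n)·‖Xᵀβ̂_ρ − y‖₂² be its training error. Then β̂_ρ is the minimum-norm τ̂-near-interpolator: for every β ∈ ℝ^p with (1/n)·‖Xᵀβ − y‖₂² ≤ τ̂, one has ‖β‖₂ ≥ ‖β̂_ρ‖₂. -/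
open Matrix

/-!
The ridge regressor minimizes the Lagrangian `trainingError + ρ * ‖·‖²`: its normal equations
kill the linear term when the square is completed, and the remaining quadratic form is nonnegative.
A minimizer of such a Lagrangian with a positive multiplier also minimizes the penalty among all
points whose loss is no larger than its own, since lowering the penalty without raising the loss
would lower the Lagrangian.
-/

section OrderedRing

variable {α R : Type*} [Ring R] [LinearOrder R] [IsStrictOrderedRing R]

theorem dotProduct_self_nonneg {ι : Type*} [Fintype ι] (v : ι → R) : 0 ≤ v ⬝ᵥ v :=
  Fintype.sum_nonneg fun _ => mul_self_nonneg _

theorem isMinOn_sublevel_of_isMinOn_add_const_mul {loss penalty : α → R} {ρ : R} {s : Set α} {b : α}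
    (hρ : 0 < ρ) (hb : IsMinOn (fun x => loss x + ρ * penalty x) s b) :
    IsMinOn penalty {x ∈ s | loss x ≤ loss b} b := by
  rintro x ⟨hxs, hloss⟩
  have hlagrangian : loss b + ρ * penalty b ≤ loss x + ρ * penalty x := hb hxs
  have hpenalty : ρ * penalty b ≤ ρ * penalty x :=
    le_of_add_le_add_left (hlagrangian.trans (add_le_add_left hloss _))
  exact le_of_mul_le_mul_left hpenalty hρ

end OrderedRing

section CommRing

variable {p n R : Type*} [Fintype p] [Fintype n] [CommRing R]

/-- The squared error `c * ‖Xᵀ β - y‖²` of the linear predictor `β` on the data `(X, y)`, whose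
samples are the columns of `X`. The weight `c` is the paper's `1 / n`. -/
def trainingError (c : R) (X : Matrix p n R) (y : n → R) (β : p → R) : R :=
  c * ((Xᵀ *ᵥ β - y) ⬝ᵥ (Xᵀ *ᵥ β - y))

/-- The objective `c * ‖Xᵀ β - y‖² + ρ * ‖β‖²` of ridge regression. -/
def ridgeObjective (c ρ : R) (X : Matrix p n R) (y : n → R) (β : p → R) : R :=
  trainingError c X y β + ρ * (β ⬝ᵥ β)

variable [DecidableEq p]

/-- The regularized sample covariance `c X Xᵀ + ρ I`, the matrix of the normal equations of ridge
regression. -/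
def ridgeMatrix (c ρ : R) (X : Matrix p n R) : Matrix p p R :=
  c • (X * Xᵀ) + ρ • (1 : Matrix p p R)

/-- The ridge regressor in closed form, `(c X Xᵀ + ρ I)⁻¹ (c X y)`. The inverse is Mathlib's
total one, with value `0` at a singular matrix. -/
noncomputable def ridgeRegressor (c ρ : R) (X : Matrix p n R) (y : n → R) : p → R :=
  (ridgeMatrix c ρ X)⁻¹ *ᵥ (c • (X *ᵥ y))

theorem dotProduct_ridgeMatrix_mulVec (c ρ : R) (X : Matrix p n R) (u v : p → R) :
    u ⬝ᵥ (ridgeMatrix c ρ X *ᵥ v) = c * ((Xᵀ *ᵥ u) ⬝ᵥ (Xᵀ *ᵥ v)) + ρ * (u ⬝ᵥ v) := by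
  simp only [ridgeMatrix, add_mulVec, smul_mulVec, one_mulVec, ← mulVec_mulVec, dotProduct_add,
    dotProduct_smul, smul_eq_mul, dotProduct_mulVec u X, mulVec_transpose]

theorem mul_dotProduct_self_le_dotProduct_ridgeMatrix_mulVec [LinearOrder R]
    [IsStrictOrderedRing R] {c : R} (hc : 0 ≤ c) (ρ : R) (X : Matrix p n R) (v : p → R) :
    ρ * (v ⬝ᵥ v) ≤ v ⬝ᵥ (ridgeMatrix c ρ X *ᵥ v) := by
  rw [dotProduct_ridgeMatrix_mulVec]
  exact le_add_of_nonneg_left (mul_nonneg hc (dotProduct_self_nonneg _))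

theorem ridgeObjective_add_of_normal_eq {c ρ : R} {X : Matrix p n R} {y : n → R} {b : p → R}
    (hb : ridgeMatrix c ρ X *ᵥ b = c • (X *ᵥ y)) (d : p → R) :
    ridgeObjective c ρ X y (b + d) =
      ridgeObjective c ρ X y b + d ⬝ᵥ (ridgeMatrix c ρ X *ᵥ d) := by
  have hnormal : c * ((Xᵀ *ᵥ d) ⬝ᵥ (Xᵀ *ᵥ b)) + ρ * (d ⬝ᵥ b) = c * ((Xᵀ *ᵥ d) ⬝ᵥ y) := by
    rw [← dotProduct_ridgeMatrix_mulVec, hb, dotProduct_smul, smul_eq_mul, dotProduct_mulVec,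
      mulVec_transpose]
  have hresidual : Xᵀ *ᵥ (b + d) - y = (Xᵀ *ᵥ b - y) + Xᵀ *ᵥ d := by
    rw [mulVec_add, add_sub_right_comm]
  rw [ridgeObjective, ridgeObjective, trainingError, trainingError, hresidual,
    dotProduct_ridgeMatrix_mulVec]
  simp only [add_dotProduct, dotProduct_add, sub_dotProduct, dotProduct_sub,
    dotProduct_comm _ (Xᵀ *ᵥ d), dotProduct_comm b d]
  linear_combination 2 * hnormal

end CommRing

section OrderedField

variable {p n K : Type*} [Fintype p] [Fintype n] [DecidableEq p]
  [Field K] [LinearOrder K] [IsStrictOrderedRing K] {c ρ : K}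

theorem isUnit_ridgeMatrix (hc : 0 ≤ c) (hρ : 0 < ρ) (X : Matrix p n K) :
    IsUnit (ridgeMatrix c ρ X) := by
  rw [← mulVec_injective_iff_isUnit]
  refine (injective_iff_map_eq_zero (ridgeMatrix c ρ X).mulVecLin).mpr fun v hv => ?_
  have hle := mul_dotProduct_self_le_dotProduct_ridgeMatrix_mulVec hc ρ X v
  rw [← mulVecLin_apply, hv, dotProduct_zero] at hle
  exact dotProduct_self_eq_zero.mp
    (le_antisymm (nonpos_of_mul_nonpos_right hle hρ) (dotProduct_self_nonneg v))

theorem ridgeMatrix_mulVec_ridgeRegressor (hc : 0 ≤ c) (hρ : 0 < ρ) (X : Matrix p n K)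
    (y : n → K) : ridgeMatrix c ρ X *ᵥ ridgeRegressor c ρ X y = c • (X *ᵥ y) := by
  have hdet := (isUnit_iff_isUnit_det _).mp (isUnit_ridgeMatrix hc hρ X)
  rw [ridgeRegressor, mulVec_mulVec, mul_nonsing_inv _ hdet, one_mulVec]

theorem isMinOn_ridgeObjective_ridgeRegressor (hc : 0 ≤ c) (hρ : 0 < ρ) (X : Matrix p n K)
    (y : n → K) : IsMinOn (ridgeObjective c ρ X y) Set.univ (ridgeRegressor c ρ X y) := by
  rw [isMinOn_univ_iff]
  intro β
  obtain ⟨d, rfl⟩ : ∃ d, β = ridgeRegressor c ρ X y + d := ⟨_, (add_sub_cancel _ β).symm⟩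
  rw [ridgeObjective_add_of_normal_eq (ridgeMatrix_mulVec_ridgeRegressor hc hρ X y)]
  exact le_add_of_nonneg_right <| (mul_nonneg hρ.le (dotProduct_self_nonneg d)).trans
    (mul_dotProduct_self_le_dotProduct_ridgeMatrix_mulVec hc ρ X d)

theorem ridge_is_min_norm_near_interpolator_general (hc : 0 ≤ c) (hρ : 0 < ρ) (X : Matrix p n K)
    (y : n → K) :
    IsMinOn (fun β => β ⬝ᵥ β)
      {β | trainingError c X y β ≤ trainingError c X y (ridgeRegressor c ρ X y)}
      (ridgeRegressor c ρ X y) := by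
  simpa only [Set.mem_univ, true_and] using
    isMinOn_sublevel_of_isMinOn_add_const_mul hρ (isMinOn_ridgeObjective_ridgeRegressor hc hρ X y)

end OrderedField

/-- The ridge regressor `β̂_ρ` is the minimum-norm `τ̂`-near-interpolator where
`τ̂` is its own training error: any `β` whose training error is at most `τ̂` satisfies
`‖β‖₂ ≥ ‖β̂_ρ‖₂` (equivalently, for squared norms). -/
theorem ridge_is_min_norm_near_interpolator (p n : ℕ) (hp : 0 < p) (hn : 0 < n)
    (X : Matrix (Fin p) (Fin n) ℝ) (y : Fin n → ℝ) (ρ : ℝ) (hρ : 0 < ρ) :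
    ∀ β : Fin p → ℝ,
      (1 / (n : ℝ)) * (∑ i, (Xᵀ *ᵥ β - y) i ^ 2)
        ≤ (1 / (n : ℝ)) *
            (∑ i, (Xᵀ *ᵥ (((1 / (n : ℝ)) • (X * Xᵀ) + ρ • (1 : Matrix (Fin p) (Fin p) ℝ))⁻¹
                    *ᵥ ((1 / (n : ℝ)) • (X *ᵥ y))) - y) i ^ 2) →
      Real.sqrt (∑ j, ((((1 / (n : ℝ)) • (X * Xᵀ) + ρ • (1 : Matrix (Fin p) (Fin p) ℝ))⁻¹
                    *ᵥ ((1 / (n : ℝ)) • (X *ᵥ y))) j) ^ 2)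
        ≤ Real.sqrt (∑ j, (β j) ^ 2) := by
  simp only [sq]
  exact fun β hβ => Real.sqrt_le_sqrt
    (ridge_is_min_norm_near_interpolator_general (by positivity) hρ X y hβ)
end
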